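/- Rearrangement inequality for the anisotropic radial weight: let F⁰ be the dual of a Minkowski-type norm F on ℝ^{n+1}, let L = {x ∈ ℝ^{n+1} : F⁰(x) < 1}, let P ∈ ℝ^{n+1}, a > 0, and let E ⊂ ℝ^{n+1} be a Lebesgue-measurable set with Vol(E) = Vol(P + a·L) < ∞. Then ∫_E (F⁰(x − P))⁻¹ dx ≤ ∫_{P + a·L} (F⁰(x − P))⁻¹ dx, where integrals are with respect to (n+1)-dimensional Lebesgue measure. -/

import Mathlib

/-!
The weight `(F⁰(x - P))⁻¹` is a decreasing function of `F⁰(x - P)`, and `P + a·L` is exactly the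
sublevel set `{x | F⁰(x - P) < a}` (`image_smul_dualNorm_ball`, from homogeneity of `F⁰`). Hence
the weight is at most `a⁻¹` outside `P + a·L` and at least `a⁻¹` inside, except at the centre `P`,
where the Lean value is `0⁻¹ = 0`; a single point is Lebesgue-null. Since `E` and `P + a·L` have
equal finite volume, so do `E \ (P + a·L)` and `(P + a·L) \ E`, and moving the mass from the
former to the latter can only increase the integral (`setLIntegral_le_of_threshold`).
-/

open scoped RealInnerProductSpace
open MeasureTheory
noncomputable section

/-- Euclidean space `ℝ^{n+1}`. -/
abbrev Euc (n : ℕ) := EuclideanSpace ℝ (Fin (n + 1))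

/-- A Minkowski-type norm on `ℝ^{n+1}` with comparison constants `c ≤ C`:
`F 0 = 0`, `F` convex, positively 1-homogeneous and `c‖x‖ ≤ F x ≤ C‖x‖`. -/
structure IsMinkowskiTypeNorm (n : ℕ) (F : Euc n → ℝ) (c C : ℝ) : Prop where
  zero : F 0 = 0
  convexOn : ConvexOn ℝ Set.univ F
  homog : ∀ l : ℝ, 0 < l → ∀ x : Euc n, F (l • x) = l * F x
  c_pos : 0 < c
  c_le_C : c ≤ C
  lower : ∀ x : Euc n, c * ‖x‖ ≤ F x
  upper : ∀ x : Euc n, F x ≤ C * ‖x‖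

/-- The dual norm `F⁰(x) = sup_{y ≠ 0} ⟪x, y⟫ / F(y)`. -/
def dualNorm (n : ℕ) (F : Euc n → ℝ) (x : Euc n) : ℝ :=
  ⨆ y : {y : Euc n // y ≠ 0}, ⟪x, (y : Euc n)⟫ / F (y : Euc n)

open scoped Pointwise

/-- The bathtub principle: if `f ≤ k` off `B` and `f ≥ k` almost everywhere on `B`, then `B`
maximizes `∫⁻ f` among sets of the same finite measure. -/
theorem setLIntegral_le_of_threshold {α : Type*} [MeasurableSpace α] {μ : Measure α}
    {f : α → ENNReal} {k : ENNReal} {A B : Set α} (hA : MeasurableSet A) (hB : MeasurableSet B)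
    (hAB : μ A = μ B) (hfin : μ A < ⊤) (hout : ∀ x ∉ B, f x ≤ k)
    (hin : ∀ᵐ x ∂μ, x ∈ B → k ≤ f x) :
    ∫⁻ x in A, f x ∂μ ≤ ∫⁻ x in B, f x ∂μ := by
  have hdiff : μ (A \ B) = μ (B \ A) := by
    have h1 := measure_inter_add_sdiff (μ := μ) A hB
    have h2 := measure_inter_add_sdiff (μ := μ) B hA
    rw [← hAB, ← h1, Set.inter_comm B A] at h2
    have hne : μ (A ∩ B) ≠ ⊤ := ((measure_mono Set.inter_subset_left).trans_lt hfin).ne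
    exact ((ENNReal.add_right_inj hne).1 h2).symm
  rw [← lintegral_inter_add_sdiff f A hB, ← lintegral_inter_add_sdiff f B hA, Set.inter_comm B A]
  refine add_le_add le_rfl ?_
  calc ∫⁻ x in A \ B, f x ∂μ ≤ ∫⁻ _ in A \ B, k ∂μ :=
        setLIntegral_mono' (hA.diff hB) fun x hx => hout x hx.2
    _ = ∫⁻ _ in B \ A, k ∂μ := by simp only [setLIntegral_const, hdiff]
    _ ≤ ∫⁻ x in B \ A, f x ∂μ := by
        refine setLIntegral_mono_ae' (hB.diff hA) ?_
        filter_upwards [hin] with x hx hxB using hx hxB.1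

namespace IsMinkowskiTypeNorm

variable {n : ℕ} {F : Euc n → ℝ} {c C : ℝ}

theorem pos (hF : IsMinkowskiTypeNorm n F c C) {y : Euc n} (hy : y ≠ 0) : 0 < F y :=
  (mul_pos hF.c_pos (norm_pos_iff.2 hy)).trans_le (hF.lower y)

/-- By Cauchy–Schwarz and `c‖y‖ ≤ F y`, the quotients defining `F⁰(x)` are bounded by `‖x‖ / c`,
so the supremum is a genuine one. -/
theorem bddAbove_dualNorm (hF : IsMinkowskiTypeNorm n F c C) (x : Euc n) :
    BddAbove (Set.range fun y : {y : Euc n // y ≠ 0} => ⟪x, (y : Euc n)⟫ / F (y : Euc n)) := by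
  refine ⟨‖x‖ / c, ?_⟩
  rintro _ ⟨⟨y, hy⟩, rfl⟩
  rw [div_le_div_iff₀ (hF.pos hy) hF.c_pos]
  calc ⟪x, y⟫ * c ≤ (‖x‖ * ‖y‖) * c :=
        mul_le_mul_of_nonneg_right (real_inner_le_norm x y) hF.c_pos.le
    _ = ‖x‖ * (c * ‖y‖) := by ring
    _ ≤ ‖x‖ * F y := mul_le_mul_of_nonneg_left (hF.lower y) (norm_nonneg x)

theorem dualNorm_pos (hF : IsMinkowskiTypeNorm n F c C) {x : Euc n} (hx : x ≠ 0) :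
    0 < dualNorm n F x := by
  refine lt_of_lt_of_le ?_ (le_ciSup (hF.bddAbove_dualNorm x) ⟨x, hx⟩)
  exact div_pos (real_inner_self_pos.2 hx) (hF.pos hx)

/-- `F⁰` is a supremum of continuous functions, hence lower semicontinuous. -/
theorem measurable_dualNorm (hF : IsMinkowskiTypeNorm n F c C) : Measurable (dualNorm n F) := by
  have h : LowerSemicontinuous (dualNorm n F) :=
    lowerSemicontinuous_ciSup hF.bddAbove_dualNorm fun y =>
      Continuous.lowerSemicontinuous (by fun_prop)
  exact h.measurable

end IsMinkowskiTypeNorm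

theorem dualNorm_smul {n : ℕ} (F : Euc n → ℝ) {r : ℝ} (hr : 0 ≤ r) (x : Euc n) :
    dualNorm n F (r • x) = r * dualNorm n F x := by
  simp only [dualNorm, real_inner_smul_left, mul_div_assoc, Real.mul_iSup_of_nonneg hr]

theorem image_smul_dualNorm_ball {n : ℕ} (F : Euc n → ℝ) (P : Euc n) {a : ℝ} (ha : 0 < a) :
    (fun y => P + y) '' (a • {x : Euc n | dualNorm n F x < 1}) =
      {x | dualNorm n F (x - P) < a} := by
  ext x
  rw [Set.image_add_left, Set.mem_preimage, Set.mem_smul_set_iff_inv_smul_mem₀ ha.ne',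
    Set.mem_ofPred_eq, Set.mem_ofPred_eq, dualNorm_smul F (inv_nonneg.2 ha.le), neg_add_eq_sub,
    inv_mul_lt_iff₀ ha, mul_one]

/-- Rearrangement inequality for the anisotropic radial weight: among measurable sets `E`
with the same volume as the translated dilated Wulff body `P + a·L`, the integral of
`(F⁰(x − P))⁻¹` is maximized by `P + a·L`. -/
theorem rearrangement_inv_dualNorm (n : ℕ) (F : Euc n → ℝ) (c C : ℝ)
    (hF : IsMinkowskiTypeNorm n F c C) (P : Euc n) (a : ℝ) (ha : 0 < a)
    (Eset : Set (Euc n)) (hmeas : MeasurableSet Eset)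
    (hvol : volume Eset =
      volume ((fun y => P + y) '' (a • {x : Euc n | dualNorm n F x < 1})))
    (hfin : volume Eset < ⊤) :
    ∫⁻ x in Eset, ENNReal.ofReal ((dualNorm n F (x - P))⁻¹) ≤
      ∫⁻ x in (fun y => P + y) '' (a • {x : Euc n | dualNorm n F x < 1}),
        ENNReal.ofReal ((dualNorm n F (x - P))⁻¹) := by
  rw [image_smul_dualNorm_ball F P ha] at hvol ⊢
  have hB : MeasurableSet {x | dualNorm n F (x - P) < a} :=
    measurableSet_lt (hF.measurable_dualNorm.comp (measurable_id.sub_const P)) measurable_const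
  refine setLIntegral_le_of_threshold (k := ENNReal.ofReal a⁻¹) hmeas hB hvol hfin ?_ ?_
  · intro x hx
    exact ENNReal.ofReal_le_ofReal (inv_anti₀ ha (not_lt.1 hx))
  · -- The centre is discarded as a null set: there `F⁰` vanishes and its `⁻¹` is `0` in Lean.
    have hP : ∀ᵐ x : Euc n, x ≠ P := by simp [ae_iff]
    filter_upwards [hP] with x hxP hx
    exact ENNReal.ofReal_le_ofReal
      (inv_anti₀ (hF.dualNorm_pos (sub_ne_zero.2 hxP)) (le_of_lt hx))
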